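/- arXiv:2007.12290 — 6 statements merged into one kernel-verified Lean document; each statement's English description precedes it below -/
import Mathlib

section
/- Let 1 ≤ m ≤ 3, let μ > 0 and λ > −(2/3)μ. Then there exists η > 0 such that the St. Venant–Kirchhoff energy density ψ₀ is strongly convex with modulus η on Sᵐ, i.e. ψ₀(tA+(1−t)B) ≤ t ψ₀(A) + (1−t) ψ₀(B) − (η/2) t(1−t)‖A−B‖_F² for all A, B ∈ Sᵐ and t ∈ [0,1]. -/
open scoped Matrix

noncomputable section

/-- St. Venant–Kirchhoff elastic energy density `ψ₀(ε) = (λ/2)(tr ε)² + μ tr(ε²)`. -/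
def psi0 (m : ℕ) (lam mu : ℝ) (A : Matrix (Fin m) (Fin m) ℝ) : ℝ :=
  lam / 2 * A.trace ^ 2 + mu * (A * A).trace

/-- Squared Frobenius norm. -/
def frobSq {m : ℕ} (A : Matrix (Fin m) (Fin m) ℝ) : ℝ := ∑ i, ∑ j, A i j ^ 2

/-!
The energy density is a quadratic form, so its convexity defect along a segment from `A` to `B` is
exactly `t (1 - t) ψ₀(A - B)`, and strong convexity amounts to coercivity of `ψ₀` on symmetric
matrices. There `ψ₀(D) = (λ/2) (tr D)² + μ ‖D‖²`, where `(tr D)²` ranges between `0` and `m ‖D‖²`;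
comparing with the two extremes gives every modulus up to the smaller of `2μ` and `2μ + mλ`.
-/

section Trace

variable {n R : Type*} [Fintype n]

lemma trace_mul_self_eq_sum_sq_of_isSymm [Semiring R] {A : Matrix n n R} (hA : A.IsSymm) :
    (A * A).trace = ∑ i, ∑ j, A i j ^ 2 := by
  simp only [Matrix.trace, Matrix.diag, Matrix.mul_apply, hA.apply, sq]

lemma sq_trace_le_card_mul_sum_sq [Ring R] [LinearOrder R] [IsStrictOrderedRing R]
    (A : Matrix n n R) : A.trace ^ 2 ≤ Fintype.card n * ∑ i, ∑ j, A i j ^ 2 :=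
  calc A.trace ^ 2 ≤ Fintype.card n * ∑ i, A i i ^ 2 := sq_sum_le_card_mul_sum_sq
    _ ≤ Fintype.card n * ∑ i, ∑ j, A i j ^ 2 := by
      gcongr with i
      exact Finset.single_le_sum (f := fun j ↦ A i j ^ 2) (fun j _ ↦ sq_nonneg _)
        (Finset.mem_univ i)

end Trace

lemma quadraticMap_smul_add_one_sub_smul {R M N : Type*} [CommRing R] [AddCommGroup M]
    [AddCommGroup N] [Module R M] [Module R N] (Q : QuadraticMap R M N) (t : R) (x y : M) :
    Q (t • x + (1 - t) • y) = t • Q x + (1 - t) • Q y - (t * (1 - t)) • Q (x - y) := by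
  rw [sub_eq_add_neg x y]
  simp only [QuadraticMap.map_add Q, QuadraticMap.map_smul, QuadraticMap.map_neg,
    QuadraticMap.polar_smul_left, QuadraticMap.polar_smul_right, QuadraticMap.polar_neg_right]
  module

section EnergyDensity

variable {m : ℕ} {lam mu η : ℝ}

/-- The energy density `psi0` as a bundled quadratic form, which makes the algebra of
`QuadraticMap` available for it. -/
def psi0Form (m : ℕ) (lam mu : ℝ) : QuadraticForm ℝ (Matrix (Fin m) (Fin m) ℝ) :=
  (lam / 2) • QuadraticMap.sq.comp (Matrix.traceLinearMap (Fin m) ℝ ℝ) +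
    mu • (Matrix.traceLinearMap (Fin m) ℝ ℝ).compQuadraticMap QuadraticMap.sq

lemma psi0Form_apply (A : Matrix (Fin m) (Fin m) ℝ) : psi0Form m lam mu A = psi0 m lam mu A := by
  simp [psi0Form, psi0, sq]

lemma psi0_smul_add_one_sub_smul (t : ℝ) (A B : Matrix (Fin m) (Fin m) ℝ) :
    psi0 m lam mu (t • A + (1 - t) • B) =
      t * psi0 m lam mu A + (1 - t) * psi0 m lam mu B - t * (1 - t) * psi0 m lam mu (A - B) := by
  simpa only [psi0Form_apply, smul_eq_mul] using
    quadraticMap_smul_add_one_sub_smul (psi0Form m lam mu) t A B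

lemma frobSq_nonneg (A : Matrix (Fin m) (Fin m) ℝ) : 0 ≤ frobSq A :=
  Finset.sum_nonneg fun _ _ ↦ Finset.sum_nonneg fun _ _ ↦ sq_nonneg _

lemma psi0_eq_of_isSymm {D : Matrix (Fin m) (Fin m) ℝ} (hD : D.IsSymm) :
    psi0 m lam mu D = lam / 2 * D.trace ^ 2 + mu * frobSq D := by
  rw [psi0, trace_mul_self_eq_sum_sq_of_isSymm hD, frobSq]

lemma half_mul_frobSq_le_psi0 (hη : η ≤ 2 * mu) (hη' : η ≤ 2 * mu + m * lam)
    {D : Matrix (Fin m) (Fin m) ℝ} (hD : D.IsSymm) : η / 2 * frobSq D ≤ psi0 m lam mu D := by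
  have htrace : D.trace ^ 2 ≤ m * frobSq D := by
    simpa only [Fintype.card_fin, frobSq] using sq_trace_le_card_mul_sum_sq D
  have hfrob : 0 ≤ frobSq D := frobSq_nonneg D
  rw [psi0_eq_of_isSymm hD]
  rcases le_total 0 lam with hlam | hlam
  · calc η / 2 * frobSq D ≤ mu * frobSq D := by gcongr; linarith
      _ ≤ lam / 2 * D.trace ^ 2 + mu * frobSq D := le_add_of_nonneg_left (by positivity)
  · calc η / 2 * frobSq D ≤ (lam / 2 * m + mu) * frobSq D := by gcongr; linarith
      _ = lam / 2 * (m * frobSq D) + mu * frobSq D := by ring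
      _ ≤ lam / 2 * D.trace ^ 2 + mu * frobSq D := by
        gcongr ?_ + _
        exact mul_le_mul_of_nonpos_left htrace (by linarith)

end EnergyDensity

theorem stmt_0_general (m : ℕ) (mu lam : ℝ) (hmu : 0 < mu) (hlam : 0 < 2 * mu + m * lam) :
    ∃ η > (0 : ℝ), ∀ A B : Matrix (Fin m) (Fin m) ℝ, A.IsSymm → B.IsSymm →
      ∀ t ∈ Set.Icc (0 : ℝ) 1,
        psi0 m lam mu (t • A + (1 - t) • B)
          ≤ t * psi0 m lam mu A + (1 - t) * psi0 m lam mu B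
            - η / 2 * (t * (1 - t)) * frobSq (A - B) := by
  set η : ℝ := min (2 * mu) (2 * mu + m * lam)
  refine ⟨η, lt_min (by positivity) hlam, ?_⟩
  rintro A B hA hB t ⟨ht0, ht1⟩
  have hcoercive : η / 2 * frobSq (A - B) ≤ psi0 m lam mu (A - B) :=
    half_mul_frobSq_le_psi0 (min_le_left _ _) (min_le_right _ _) (hA.sub hB)
  have ht : 0 ≤ t * (1 - t) := mul_nonneg ht0 (sub_nonneg.2 ht1)
  rw [psi0_smul_add_one_sub_smul, mul_comm (η / 2), mul_assoc (t * (1 - t))]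
  exact sub_le_sub_left (mul_le_mul_of_nonneg_left hcoercive ht) _

theorem stmt_0 (m : ℕ) (hm1 : 1 ≤ m) (hm3 : m ≤ 3) (mu lam : ℝ)
    (hmu : 0 < mu) (hlam : -(2 / 3) * mu < lam) :
    ∃ η > (0 : ℝ), ∀ A B : Matrix (Fin m) (Fin m) ℝ, A.IsSymm → B.IsSymm →
      ∀ t ∈ Set.Icc (0 : ℝ) 1,
        psi0 m lam mu (t • A + (1 - t) • B)
          ≤ t * psi0 m lam mu A + (1 - t) * psi0 m lam mu B
            - η / 2 * (t * (1 - t)) * frobSq (A - B) := by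
  have hcoeff : 0 < 2 * mu + m * lam := by interval_cases m <;> norm_num <;> linarith
  exact stmt_0_general m mu lam hmu hcoeff
end
end

section
/- Let m ≥ 1, μ > 0, λ ∈ ℝ with μ/m + λ/2 > 0, and let c > 0 with c ≠ 1. Then the function ε ↦ c(μ/m + λ/2)⟨tr ε⟩₊² + (μ/m + λ/2)⟨tr ε⟩₋² + μ‖dev ε‖_F² is not twice continuously differentiable on Sᵐ (it is not of class C²). -/
open scoped Matrix

noncomputable section

attribute [local instance] Matrix.frobeniusSeminormedAddCommGroup
attribute [local instance] Matrix.frobeniusNormedAddCommGroup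
attribute [local instance] Matrix.frobeniusNormedSpace

/-- The space `Sᵐ` of symmetric m×m real matrices, as a submodule of the matrix space
equipped with the Frobenius norm. -/
def SymMat (m : ℕ) : Submodule ℝ (Matrix (Fin m) (Fin m) ℝ) where
  carrier := {A | A.IsSymm}
  add_mem' := fun ha hb => ha.add hb
  zero_mem' := Matrix.isSymm_zero
  smul_mem' := fun c A hA => by
    show (c • A)ᵀ = c • A
    rw [Matrix.transpose_smul]
    exact congrArg _ hA

/-- The degraded density `c ψ₀⁺ + ψ₀⁻` with the anisotropic volumetric splitting:
`ε ↦ c(μ/m + λ/2)⟨tr ε⟩₊² + (μ/m + λ/2)⟨tr ε⟩₋² + μ‖dev ε‖_F²`. -/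
def psiVolDeg (m : ℕ) (mu lam c : ℝ) (x : SymMat m) : ℝ :=
  c * ((mu / m + lam / 2) * max (Matrix.trace (x : Matrix (Fin m) (Fin m) ℝ)) 0 ^ 2)
    + (mu / m + lam / 2) * min (Matrix.trace (x : Matrix (Fin m) (Fin m) ℝ)) 0 ^ 2
    + mu * ‖(x : Matrix (Fin m) (Fin m) ℝ)
        - (Matrix.trace (x : Matrix (Fin m) (Fin m) ℝ) / (m : ℝ)) • (1 : Matrix (Fin m) (Fin m) ℝ)‖ ^ 2

/-!
On the line `t ↦ ε + t I` through a trace-free `ε` the deviatoric part is constant and, since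
`⟨s⟩₊² + ⟨s⟩₋² = s²`, the density is a polynomial in `t` plus a nonzero multiple of `(c - 1) ⟨t⟩₊²`.
The second derivative of `⟨t⟩₊²` jumps at `0`, so the density is not `C²` at any trace-free `ε`.
-/

open scoped Topology

theorem hasDerivAt_max_zero_pow {n : ℕ} (hn : n ≠ 0) (x : ℝ) :
    HasDerivAt (fun t : ℝ => max t 0 ^ (n + 1)) ((n + 1) * max x 0 ^ n) x := by
  refine hasDerivAt_of_hasDerivAt_of_ne' (x := 0) (g := fun t : ℝ => (n + 1) * max t 0 ^ n)
    (fun y hy => ?_) (by fun_prop) (by fun_prop) x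
  rcases hy.lt_or_gt with hneg | hpos
  · have heq : (fun t : ℝ => max t 0 ^ (n + 1)) =ᶠ[𝓝 y] fun _ => 0 := by
      filter_upwards [eventually_lt_nhds hneg] with t ht
      simp [max_eq_right ht.le]
    simpa [max_eq_right hneg.le, hn] using (hasDerivAt_const y (0 : ℝ)).congr_of_eventuallyEq heq
  · have heq : (fun t : ℝ => max t 0 ^ (n + 1)) =ᶠ[𝓝 y] fun t => t ^ (n + 1) := by
      filter_upwards [eventually_gt_nhds hpos] with t ht
      rw [max_eq_left ht.le]
    simpa [max_eq_left hpos.le] using (hasDerivAt_pow (n + 1) y).congr_of_eventuallyEq heq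

theorem not_differentiableAt_max_zero : ¬ DifferentiableAt ℝ (fun t : ℝ => max t 0) 0 := by
  intro h
  have habs : (abs : ℝ → ℝ) = fun t => 2 * max t 0 - t := by
    funext t
    rw [← posPart_def, eq_sub_iff_add_eq, abs_add_eq_two_nsmul_posPart, nsmul_eq_mul,
      Nat.cast_ofNat]
  exact not_differentiableAt_abs_zero (habs ▸ by fun_prop)

theorem not_contDiffAt_max_zero_pow (n : ℕ) :
    ¬ ContDiffAt ℝ (n + 1) (fun t : ℝ => max t 0 ^ (n + 1)) 0 := by
  induction n with
  | zero =>
    intro h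
    exact not_differentiableAt_max_zero (by simpa using h.differentiableAt (by simp))
  | succ n ih =>
    intro h
    have hderiv : deriv (fun t : ℝ => max t 0 ^ (n + 1 + 1)) =
        fun t => (((n + 1 : ℕ) : ℝ) + 1) * max t 0 ^ (n + 1) :=
      funext fun t => (hasDerivAt_max_zero_pow n.succ_ne_zero t).deriv
    have hscaled :
        ContDiffAt ℝ (n + 1) (fun t : ℝ => (((n + 1 : ℕ) : ℝ) + 1) * max t 0 ^ (n + 1)) 0 :=
      hderiv ▸ h.derivWithin (by norm_cast)
    have hcoeff : ((n + 1 : ℕ) : ℝ) + 1 ≠ 0 := by positivity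
    exact ih (by simpa only [mul_div_cancel_left₀ _ hcoeff] using
      hscaled.div_const (((n + 1 : ℕ) : ℝ) + 1))

theorem max_zero_sq_add_min_zero_sq {R : Type*} [Semiring R] [LinearOrder R] (a : R) :
    max a 0 ^ 2 + min a 0 ^ 2 = a ^ 2 := by
  rcases le_total a 0 with ha | ha <;> simp [ha]

section Density

variable {m : ℕ} {mu lam c : ℝ}

/-- The identity tensor, along which only the volumetric part of the density varies. -/
instance : One (SymMat m) := ⟨1, Matrix.isSymm_one⟩

@[simp]
theorem SymMat.coe_one : ((1 : SymMat m) : Matrix (Fin m) (Fin m) ℝ) = 1 := rfl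

theorem SymMat.trace_add_smul_one (x : SymMat m) (t : ℝ) :
    (x + t • 1 : SymMat m).1.trace = x.1.trace + t * m := by
  simp

theorem psiVolDeg_eq_add_max_trace_zero_sq (x : SymMat m) :
    psiVolDeg m mu lam c x =
      (mu / m + lam / 2) * (x.1.trace ^ 2 + (c - 1) * max x.1.trace 0 ^ 2) +
        mu * ‖x.1 - (x.1.trace / (m : ℝ)) • 1‖ ^ 2 := by
  rw [psiVolDeg, ← max_zero_sq_add_min_zero_sq (Matrix.trace _)]
  ring

theorem psiVolDeg_add_smul_one (hm : m ≠ 0) {x : SymMat m} (hx : x.1.trace = 0) (t : ℝ) :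
    psiVolDeg m mu lam c (x + t • 1) =
      (mu / m + lam / 2) * m ^ 2 * (t ^ 2 + (c - 1) * max t 0 ^ 2) + mu * ‖x.1‖ ^ 2 := by
  have htrace : (x + t • 1 : SymMat m).1.trace = t * m := by
    rw [SymMat.trace_add_smul_one, hx, zero_add]
  have hdev : (x + t • 1 : SymMat m).1 - (t * m / m : ℝ) • 1 = x := by
    rw [mul_div_cancel_right₀ t (Nat.cast_ne_zero.mpr hm)]
    exact add_sub_cancel_right _ _
  have hramp : max (t * m) 0 = max t 0 * m := by
    rw [max_mul_of_nonneg _ _ m.cast_nonneg, zero_mul]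
  rw [psiVolDeg_eq_add_max_trace_zero_sq, htrace, hdev, hramp]
  ring

end Density

theorem stmt_7_general {m : ℕ} (hm : m ≠ 0) {mu lam : ℝ} (hml : mu / m + lam / 2 ≠ 0)
    {c : ℝ} (hc1 : c ≠ 1) {x : SymMat m} (hx : x.1.trace = 0) :
    ¬ ContDiffAt ℝ 2 (psiVolDeg m mu lam c) x := by
  intro h
  have hzero : ContDiffAt ℝ 2 (psiVolDeg m mu lam c) (x + (0 : ℝ) • 1) := by
    rwa [zero_smul, add_zero]
  have hline : ContDiffAt ℝ 2 (fun t : ℝ => psiVolDeg m mu lam c (x + t • 1)) 0 :=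
    hzero.comp (0 : ℝ) (f := fun t : ℝ => x + t • (1 : SymMat m)) (by fun_prop)
  have hramp : (fun t : ℝ => max t 0 ^ 2) = fun t =>
      ((psiVolDeg m mu lam c (x + t • 1) - mu * ‖x.1‖ ^ 2) / ((mu / m + lam / 2) * m ^ 2) - t ^ 2) /
        (c - 1) := by
    have hcoeff : (mu / m + lam / 2) * m ^ 2 ≠ 0 := by positivity
    funext t
    rw [psiVolDeg_add_smul_one hm hx, add_sub_cancel_right, mul_div_cancel_left₀ _ hcoeff,
      add_sub_cancel_left, mul_div_cancel_left₀ _ (sub_ne_zero.mpr hc1)]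
  have hsmooth : ContDiffAt ℝ 2 (fun t : ℝ => max t 0 ^ 2) 0 := by
    rw [hramp]
    fun_prop
  exact not_contDiffAt_max_zero_pow 1 (by simpa [one_add_one_eq_two] using hsmooth)

theorem stmt_7 (m : ℕ) (hm : 1 ≤ m) (mu lam : ℝ) (hmu : 0 < mu)
    (hml : 0 < mu / m + lam / 2) (c : ℝ) (hc : 0 < c) (hc1 : c ≠ 1) :
    ¬ ContDiff ℝ 2 (psiVolDeg m mu lam c) := by
  exact fun h => stmt_7_general (Nat.one_le_iff_ne_zero.mp hm) hml.ne' hc1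
    (Matrix.trace_zero (Fin m) ℝ) (x := 0) h.contDiffAt
end
end

section
/- Let m ≥ 1, λ ≥ 0 and μ > 0. Then the spectral splitting functions ψ₀⁺ and ψ₀⁻, given by ψ₀^±(ε) = (λ/2)⟨Σᵢ Eig(ε)ᵢ⟩_±² + μ Σᵢ ⟨Eig(ε)ᵢ⟩_±², are convex functions on Sᵐ. -/
open scoped Matrix

noncomputable section

/-- `ψ₀⁺(ε) = (λ/2)⟨Σᵢ Eig(ε)ᵢ⟩₊² + μ Σᵢ ⟨Eig(ε)ᵢ⟩₊²` of the spectral splitting,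
extended by 0 off the set of symmetric (= real Hermitian) matrices. -/
def psiPlusSpec (m : ℕ) (lam mu : ℝ) (A : Matrix (Fin m) (Fin m) ℝ) : ℝ :=
  if h : A.IsHermitian then
    lam / 2 * max (∑ i, h.eigenvalues i) 0 ^ 2 + mu * ∑ i, max (h.eigenvalues i) 0 ^ 2
  else 0

/-- `ψ₀⁻(ε) = (λ/2)⟨Σᵢ Eig(ε)ᵢ⟩₋² + μ Σᵢ ⟨Eig(ε)ᵢ⟩₋²` of the spectral splitting,
extended by 0 off the set of symmetric (= real Hermitian) matrices. -/
def psiMinusSpec (m : ℕ) (lam mu : ℝ) (A : Matrix (Fin m) (Fin m) ℝ) : ℝ :=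
  if h : A.IsHermitian then
    lam / 2 * min (∑ i, h.eigenvalues i) 0 ^ 2 + mu * ∑ i, min (h.eigenvalues i) 0 ^ 2
  else 0

/-!
The trace of `A` is linear, so convexity of `A ↦ f (tr A)` is immediate; the point is that
`A ↦ tr f(A) = ∑ᵢ f(λᵢ(A))` is convex for convex `f`. For a unit vector `x` the squared moduli of
the coordinates of `x` in an eigenbasis of `A` are probability weights and `⟪x, A x⟫` is the
corresponding mean of the eigenvalues, so Jensen gives Peierls' inequality
`∑ⱼ f ⟪cⱼ, A cⱼ⟫ ≤ tr f(A)` for every orthonormal basis `c`. Choosing for `c` an eigenbasis of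
`a A + b B`, where the eigenvalues are `a ⟪cⱼ, A cⱼ⟫ + b ⟪cⱼ, B cⱼ⟫`, yields the claim.
-/

open scoped InnerProductSpace

section Peierls

variable {𝕜 E ι κ : Type*} [RCLike 𝕜] [NormedAddCommGroup E] [InnerProductSpace 𝕜 E]
  [Fintype ι] [Fintype κ] {b : OrthonormalBasis ι 𝕜 E} {T : E →ₗ[𝕜] E} {d : ι → ℝ}
  {s : Set ℝ} {f : ℝ → ℝ} {x : E}

theorem re_inner_map_self_eq_sum_of_eigenbasis (hT : ∀ i, T (b i) = (d i : 𝕜) • b i) (x : E) :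
    RCLike.re ⟪x, T x⟫_𝕜 = ∑ i, ‖⟪b i, x⟫_𝕜‖ ^ 2 * d i := by
  have hTx : T x = ∑ i, ⟪b i, x⟫_𝕜 • (d i : 𝕜) • b i := by
    conv_lhs => rw [← b.sum_repr' x]
    simp only [map_sum, map_smul, hT]
  rw [hTx, inner_sum, map_sum]
  refine Finset.sum_congr rfl fun i _ ↦ ?_
  rw [inner_smul_right, inner_smul_right, mul_left_comm, RCLike.re_ofReal_mul,
    inner_mul_symm_re_eq_norm, norm_mul, norm_inner_symm x, ← sq, mul_comm]

theorem re_inner_map_self_mem_of_eigenbasis (hs : Convex ℝ s) (hT : ∀ i, T (b i) = (d i : 𝕜) • b i)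
    (hd : ∀ i, d i ∈ s) (hx : ‖x‖ = 1) : RCLike.re ⟪x, T x⟫_𝕜 ∈ s := by
  rw [re_inner_map_self_eq_sum_of_eigenbasis hT]
  exact hs.sum_mem (fun _ _ ↦ sq_nonneg _) (by rw [b.sum_sq_norm_inner_right, hx, one_pow])
    fun i _ ↦ hd i

theorem map_re_inner_map_self_le_sum_of_eigenbasis (hf : ConvexOn ℝ s f)
    (hT : ∀ i, T (b i) = (d i : 𝕜) • b i) (hd : ∀ i, d i ∈ s) (hx : ‖x‖ = 1) :
    f (RCLike.re ⟪x, T x⟫_𝕜) ≤ ∑ i, ‖⟪b i, x⟫_𝕜‖ ^ 2 * f (d i) := by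
  rw [re_inner_map_self_eq_sum_of_eigenbasis hT]
  exact hf.map_sum_le (fun _ _ ↦ sq_nonneg _) (by rw [b.sum_sq_norm_inner_right, hx, one_pow])
    fun i _ ↦ hd i

theorem sum_map_re_inner_map_self_le_of_eigenbasis (hf : ConvexOn ℝ s f)
    (hT : ∀ i, T (b i) = (d i : 𝕜) • b i) (hd : ∀ i, d i ∈ s) (c : OrthonormalBasis κ 𝕜 E) :
    ∑ j, f (RCLike.re ⟪c j, T (c j)⟫_𝕜) ≤ ∑ i, f (d i) :=
  calc ∑ j, f (RCLike.re ⟪c j, T (c j)⟫_𝕜)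
      ≤ ∑ j, ∑ i, ‖⟪b i, c j⟫_𝕜‖ ^ 2 * f (d i) :=
        Finset.sum_le_sum fun j _ ↦
          map_re_inner_map_self_le_sum_of_eigenbasis hf hT hd (c.norm_eq_one j)
    _ = ∑ i, (∑ j, ‖⟪b i, c j⟫_𝕜‖ ^ 2) * f (d i) := by
        rw [Finset.sum_comm]
        simp only [Finset.sum_mul]
    _ = ∑ i, f (d i) := by
        simp only [c.sum_sq_norm_inner_left, b.norm_eq_one, one_pow, one_mul]

end Peierls

section TraceFunction

variable {𝕜 n : Type*} [RCLike 𝕜] [Fintype n] {s : Set ℝ} {f : ℝ → ℝ}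

theorem convexOn_map_re_trace (hf : ConvexOn ℝ s f) :
    ConvexOn ℝ {A : Matrix n n 𝕜 | RCLike.re A.trace ∈ s} fun A ↦ f (RCLike.re A.trace) :=
  hf.comp_linearMap (RCLike.reLm ∘ₗ Matrix.traceLinearMap n ℝ 𝕜)

variable [DecidableEq n] {A B : Matrix n n 𝕜} {a b : ℝ}

theorem toEuclideanLin_eigenvectorBasis (hA : A.IsHermitian) (i : n) :
    A.toEuclideanLin (hA.eigenvectorBasis i) = (hA.eigenvalues i : 𝕜) • hA.eigenvectorBasis i := by
  rw [Matrix.toLpLin_apply, hA.mulVec_eigenvectorBasis, RCLike.real_smul_eq_coe_smul (K := 𝕜),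
    WithLp.toLp_smul, WithLp.toLp_ofLp]

theorem trace_cfc_eq_sum_eigenvalues (hA : A.IsHermitian) (f : ℝ → ℝ) :
    (cfc f A).trace = ∑ i, (f (hA.eigenvalues i) : 𝕜) := by
  rw [hA.cfc_eq, Matrix.IsHermitian.cfc, Unitary.conjStarAlgAut_apply, Matrix.trace_mul_cycle,
    Unitary.coe_star_mul_self, Matrix.one_mul, Matrix.trace_diagonal]
  simp only [Function.comp_apply]

theorem re_trace_cfc_eq_sum_eigenvalues (hA : A.IsHermitian) (f : ℝ → ℝ) :
    RCLike.re (cfc f A).trace = ∑ i, f (hA.eigenvalues i) := by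
  simp only [trace_cfc_eq_sum_eigenvalues hA, map_sum, RCLike.ofReal_re]

theorem sum_map_re_inner_toEuclideanLin_le_re_trace_cfc {κ : Type*} [Fintype κ]
    (hf : ConvexOn ℝ s f) (hA : A.IsHermitian) (hAs : spectrum ℝ A ⊆ s)
    (c : OrthonormalBasis κ 𝕜 (EuclideanSpace 𝕜 n)) :
    ∑ j, f (RCLike.re ⟪c j, A.toEuclideanLin (c j)⟫_𝕜) ≤ RCLike.re (cfc f A).trace := by
  rw [re_trace_cfc_eq_sum_eigenvalues hA]
  exact sum_map_re_inner_map_self_le_of_eigenbasis hf (toEuclideanLin_eigenvectorBasis hA)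
    (fun i ↦ hAs (hA.eigenvalues_mem_spectrum_real i)) c

theorem re_inner_toEuclideanLin_mem (hs : Convex ℝ s) (hA : A.IsHermitian)
    (hAs : spectrum ℝ A ⊆ s) {x : EuclideanSpace 𝕜 n} (hx : ‖x‖ = 1) :
    RCLike.re ⟪x, A.toEuclideanLin x⟫_𝕜 ∈ s :=
  re_inner_map_self_mem_of_eigenbasis hs (toEuclideanLin_eigenvectorBasis hA)
    (fun i ↦ hAs (hA.eigenvalues_mem_spectrum_real i)) hx

theorem eigenvalues_eq_re_inner (hA : A.IsHermitian) (i : n) :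
    hA.eigenvalues i =
      RCLike.re ⟪hA.eigenvectorBasis i, A.toEuclideanLin (hA.eigenvectorBasis i)⟫_𝕜 := by
  rw [toEuclideanLin_eigenvectorBasis, inner_smul_right, RCLike.re_ofReal_mul,
    inner_self_eq_norm_sq, hA.eigenvectorBasis.norm_eq_one, one_pow, mul_one]

theorem eigenvalues_smul_add_smul_eq (hC : (a • A + b • B).IsHermitian) (i : n) :
    hC.eigenvalues i =
      a * RCLike.re ⟪hC.eigenvectorBasis i, A.toEuclideanLin (hC.eigenvectorBasis i)⟫_𝕜 +
      b * RCLike.re ⟪hC.eigenvectorBasis i, B.toEuclideanLin (hC.eigenvectorBasis i)⟫_𝕜 := by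
  rw [eigenvalues_eq_re_inner]
  generalize hC.eigenvectorBasis i = x
  simp only [RCLike.real_smul_eq_coe_smul (K := 𝕜), map_add, map_smul, LinearMap.add_apply,
    LinearMap.smul_apply, inner_add_right, inner_smul_right, RCLike.re_ofReal_mul]

theorem convex_setOf_isHermitian_spectrum_subset (hs : Convex ℝ s) :
    Convex ℝ {A : Matrix n n 𝕜 | A.IsHermitian ∧ spectrum ℝ A ⊆ s} := by
  rintro A ⟨hA, hAs⟩ B ⟨hB, hBs⟩ a b ha hb hab
  have hC : (a • A + b • B).IsHermitian := (hA.smul (.all a)).add (hB.smul (.all b))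
  refine ⟨hC, ?_⟩
  rw [hC.spectrum_real_eq_range_eigenvalues]
  rintro _ ⟨i, rfl⟩
  have hi := hC.eigenvectorBasis.norm_eq_one i
  rw [eigenvalues_smul_add_smul_eq]
  exact hs (re_inner_toEuclideanLin_mem hs hA hAs hi) (re_inner_toEuclideanLin_mem hs hB hBs hi)
    ha hb hab

theorem convexOn_re_trace_cfc (hf : ConvexOn ℝ s f) :
    ConvexOn ℝ {A : Matrix n n 𝕜 | A.IsHermitian ∧ spectrum ℝ A ⊆ s}
      fun A ↦ RCLike.re (cfc f A).trace := by
  have hconv := convex_setOf_isHermitian_spectrum_subset (𝕜 := 𝕜) (n := n) hf.1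
  refine ⟨hconv, fun A hA B hB a b ha hb hab ↦ ?_⟩
  have hC : (a • A + b • B).IsHermitian := (hconv hA hB ha hb hab).1
  obtain ⟨hA, hAs⟩ := hA
  obtain ⟨hB, hBs⟩ := hB
  set c := hC.eigenvectorBasis
  let qA (i : n) : ℝ := RCLike.re ⟪c i, A.toEuclideanLin (c i)⟫_𝕜
  let qB (i : n) : ℝ := RCLike.re ⟪c i, B.toEuclideanLin (c i)⟫_𝕜
  have hqA (i : n) : qA i ∈ s := re_inner_toEuclideanLin_mem hf.1 hA hAs (c.norm_eq_one i)
  have hqB (i : n) : qB i ∈ s := re_inner_toEuclideanLin_mem hf.1 hB hBs (c.norm_eq_one i)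
  calc RCLike.re (cfc f (a • A + b • B)).trace
      = ∑ i, f (a * qA i + b * qB i) := by
        simp only [re_trace_cfc_eq_sum_eigenvalues hC, eigenvalues_smul_add_smul_eq, qA, qB, c]
    _ ≤ ∑ i, (a * f (qA i) + b * f (qB i)) :=
        Finset.sum_le_sum fun i _ ↦ hf.2 (hqA i) (hqB i) ha hb hab
    _ = a * ∑ i, f (qA i) + b * ∑ i, f (qB i) := by
        rw [Finset.sum_add_distrib, Finset.mul_sum, Finset.mul_sum]
    _ ≤ a * RCLike.re (cfc f A).trace + b * RCLike.re (cfc f B).trace := by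
        gcongr
        · exact sum_map_re_inner_toEuclideanLin_le_re_trace_cfc hf hA hAs c
        · exact sum_map_re_inner_toEuclideanLin_le_re_trace_cfc hf hB hBs c

theorem convexOn_mul_map_re_trace_add_mul_re_trace_cfc (hf : ConvexOn ℝ Set.univ f)
    (ha : 0 ≤ a) (hb : 0 ≤ b) :
    ConvexOn ℝ {A : Matrix n n 𝕜 | A.IsHermitian}
      fun A ↦ a * f (RCLike.re A.trace) + b * RCLike.re (cfc f A).trace := by
  have htrace_cfc : ConvexOn ℝ {A : Matrix n n 𝕜 | A.IsHermitian}
      fun A ↦ RCLike.re (cfc f A).trace := by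
    simpa only [Set.subset_univ, and_true] using convexOn_re_trace_cfc (𝕜 := 𝕜) (n := n) hf
  have htrace : ConvexOn ℝ {A : Matrix n n 𝕜 | A.IsHermitian} fun A ↦ f (RCLike.re A.trace) :=
    (convexOn_map_re_trace hf).subset (fun _ _ ↦ Set.mem_univ _) htrace_cfc.1
  exact (htrace.smul ha).add (htrace_cfc.smul hb)

end TraceFunction

section Ramp

variable {E : Type*} [AddCommGroup E] [Module ℝ E] {s : Set E} {f : E → ℝ}

theorem convexOn_max_zero_sq (hf : ConvexOn ℝ s f) : ConvexOn ℝ s fun x ↦ max (f x) 0 ^ 2 :=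
  (hf.sup (convexOn_const 0 hf.1)).pow (fun _ _ ↦ le_max_right _ _) 2

theorem convexOn_min_zero_sq (hf : ConcaveOn ℝ s f) : ConvexOn ℝ s fun x ↦ min (f x) 0 ^ 2 := by
  refine (convexOn_max_zero_sq hf.neg).congr fun x _ ↦ ?_
  have hmax : max (-f x) 0 = -min (f x) 0 := by rw [← max_neg_neg, neg_zero]
  simp only [Pi.neg_apply, hmax, neg_sq]

end Ramp

section SpectralSplitting

variable {m : ℕ} {A : Matrix (Fin m) (Fin m) ℝ}

theorem psiPlusSpec_eq_trace_cfc (lam mu : ℝ) (hA : A.IsHermitian) :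
    psiPlusSpec m lam mu A =
      lam / 2 * max A.trace 0 ^ 2 + mu * (cfc (fun x : ℝ ↦ max x 0 ^ 2) A).trace := by
  rw [psiPlusSpec, dif_pos hA, hA.trace_eq_sum_eigenvalues, trace_cfc_eq_sum_eigenvalues hA]
  simp only [RCLike.ofReal_real_eq_id, id]

theorem psiMinusSpec_eq_trace_cfc (lam mu : ℝ) (hA : A.IsHermitian) :
    psiMinusSpec m lam mu A =
      lam / 2 * min A.trace 0 ^ 2 + mu * (cfc (fun x : ℝ ↦ min x 0 ^ 2) A).trace := by
  rw [psiMinusSpec, dif_pos hA, hA.trace_eq_sum_eigenvalues, trace_cfc_eq_sum_eigenvalues hA]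
  simp only [RCLike.ofReal_real_eq_id, id]

end SpectralSplitting

theorem stmt_10 (m : ℕ) (hm : 1 ≤ m) (lam mu : ℝ) (hlam : 0 ≤ lam) (hmu : 0 < mu) :
    ConvexOn ℝ {A : Matrix (Fin m) (Fin m) ℝ | A.IsHermitian} (psiPlusSpec m lam mu) ∧
    ConvexOn ℝ {A : Matrix (Fin m) (Fin m) ℝ | A.IsHermitian} (psiMinusSpec m lam mu) := by
  have hlam2 : 0 ≤ lam / 2 := div_nonneg hlam zero_le_two
  constructor
  · have hramp := convexOn_max_zero_sq (convexOn_id (convex_univ (𝕜 := ℝ) (E := ℝ)))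
    exact (convexOn_mul_map_re_trace_add_mul_re_trace_cfc hramp hlam2 hmu.le).congr
      fun A hA ↦ (psiPlusSpec_eq_trace_cfc lam mu hA).symm
  · have hramp := convexOn_min_zero_sq (concaveOn_id (convex_univ (𝕜 := ℝ) (E := ℝ)))
    exact (convexOn_mul_map_re_trace_add_mul_re_trace_cfc hramp hlam2 hmu.le).congr
      fun A hA ↦ (psiMinusSpec_eq_trace_cfc lam mu hA).symm
end
end

section
/- Let m = 2, μ > 0, λ < 0 and 0 < k < −λ/(2μ). Then the fully damaged spectrally split density ε ↦ k ψ₀⁺(ε) + ψ₀⁻(ε) is not convex on S². (In fact along the segment D(t) = diag(−1,t), t ∈ (0,1), it equals kμt² + (λ/2)(t−1)² + μ, which is strictly concave in t.) -/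
open scoped Matrix

noncomputable section

/-!
On diagonal matrices the spectral splitting is an explicit function of the diagonal entries. Along
`D(t) = diag(-1, t, 0, …, 0)` with `0 ≤ t ≤ 1` the trace is nonpositive, so the bulk term, which is
concave for negative `λ`, is not degraded at all, whereas the convex contribution `μ t²` of the
tensile eigenvalue is degraded by `k`. The resulting quadratic has leading coefficient
`k μ + λ / 2 < 0`, hence it is strictly concave.
-/

section Convexity

theorem strictConcaveOn_quadratic {a : ℝ} (ha : a < 0) (b c : ℝ) {s : Set ℝ} (hs : Convex ℝ s) :
    StrictConcaveOn ℝ s fun t => a * t ^ 2 + b * t + c := by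
  refine ⟨hs, fun x _ y _ hxy p q hp hq hpq => ?_⟩
  have gap_pos : 0 < -a * (p * q) * (x - y) ^ 2 :=
    mul_pos (mul_pos (neg_pos.2 ha) (mul_pos hp hq)) (sq_pos_of_ne_zero (sub_ne_zero.2 hxy))
  obtain rfl : q = 1 - p := by linarith
  simp only [smul_eq_mul]
  linear_combination gap_pos

theorem not_convexOn_of_strictConcaveOn {𝕜 E β : Type*} [Field 𝕜] [LinearOrder 𝕜]
    [IsStrictOrderedRing 𝕜] [AddCommMonoid E] [SMul 𝕜 E] [AddCommMonoid β] [PartialOrder β]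
    [SMul 𝕜 β] {s : Set E} {f : E → β} (hs : s.Nontrivial) (hf : StrictConcaveOn 𝕜 s f) :
    ¬ ConvexOn 𝕜 s f := by
  intro hconvex
  obtain ⟨x, hx, y, hy, hxy⟩ := hs
  exact (hf.2 hx hy hxy one_half_pos one_half_pos (add_halves 1)).not_ge
    (hconvex.2 hx hy one_half_pos.le one_half_pos.le (add_halves 1))

end Convexity

section Diagonal

theorem sum_comp_eigenvalues_diagonal {𝕜 ι M : Type*} [RCLike 𝕜] [Fintype ι] [DecidableEq ι]
    [AddCommMonoid M] {d : ι → ℝ} (h : (Matrix.diagonal fun i => (d i : 𝕜)).IsHermitian)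
    (f : ℝ → M) :
    ∑ i, f (h.eigenvalues i) = ∑ i, f (d i) := by
  have eigenvalues_eq_entries :
      Finset.univ.val.map h.eigenvalues = Finset.univ.val.map d := by
    apply Multiset.map_injective (RCLike.ofReal_injective (K := 𝕜))
    rw [Multiset.map_map, Multiset.map_map, ← h.roots_charpoly_eq_eigenvalues,
      Matrix.charpoly_diagonal]
    simpa only [Multiset.map_map] using! Polynomial.roots_multiset_prod_X_sub_C
      (Finset.univ.val.map fun i => (d i : 𝕜))
  simpa only [Multiset.map_map] using! congrArg (fun s => (s.map f).sum) eigenvalues_eq_entries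

variable {m : ℕ} (lam mu : ℝ) (d : Fin m → ℝ)

theorem psiPlusSpec_diagonal :
    psiPlusSpec m lam mu (Matrix.diagonal d) =
      lam / 2 * max (∑ i, d i) 0 ^ 2 + mu * ∑ i, max (d i) 0 ^ 2 := by
  have h := Matrix.isHermitian_diagonal d
  rw [psiPlusSpec, dif_pos h, sum_comp_eigenvalues_diagonal (𝕜 := ℝ) h fun x => x,
    sum_comp_eigenvalues_diagonal (𝕜 := ℝ) h fun x => max x 0 ^ 2]

theorem psiMinusSpec_diagonal :
    psiMinusSpec m lam mu (Matrix.diagonal d) =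
      lam / 2 * min (∑ i, d i) 0 ^ 2 + mu * ∑ i, min (d i) 0 ^ 2 := by
  have h := Matrix.isHermitian_diagonal d
  rw [psiMinusSpec, dif_pos h, sum_comp_eigenvalues_diagonal (𝕜 := ℝ) h fun x => x,
    sum_comp_eigenvalues_diagonal (𝕜 := ℝ) h fun x => min x 0 ^ 2]

end Diagonal

section Damaged

/-- The fully damaged density `k ψ₀⁺ + ψ₀⁻` with residual stiffness `k`. -/
def damagedDensity (m : ℕ) (lam mu k : ℝ) (A : Matrix (Fin m) (Fin m) ℝ) : ℝ :=
  k * psiPlusSpec m lam mu A + psiMinusSpec m lam mu A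

/-- The line `D(t) = diag(-1, t, 0, …, 0)` of strains, uniaxial compression combined with
transverse tension. It is an affine map so that convexity can be pulled back along it. -/
def strainLine (n : ℕ) : ℝ →ᵃ[ℝ] Matrix (Fin (n + 2)) (Fin (n + 2)) ℝ :=
  AffineMap.lineMap (Matrix.diagonal (Matrix.vecCons (-1) (Matrix.vecCons 0 0)))
    (Matrix.diagonal (Matrix.vecCons (-1) (Matrix.vecCons 1 0)))

theorem strainLine_apply (n : ℕ) (t : ℝ) :
    strainLine n t = Matrix.diagonal (Matrix.vecCons (-1) (Matrix.vecCons t 0)) := by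
  have entries_eq : (1 - t) • Matrix.vecCons (-1 : ℝ) (Matrix.vecCons 0 (0 : Fin n → ℝ)) +
      t • Matrix.vecCons (-1) (Matrix.vecCons 1 0) = Matrix.vecCons (-1) (Matrix.vecCons t 0) := by
    simp only [Matrix.smul_cons, Matrix.cons_add_cons, smul_eq_mul, smul_zero, add_zero]
    ring_nf
  rw [strainLine, AffineMap.lineMap_apply_module, ← Matrix.diagonal_smul, ← Matrix.diagonal_smul,
    ← entries_eq]
  exact Matrix.diagonal_add _ _

theorem damagedDensity_strainLine (n : ℕ) (lam mu k : ℝ) {t : ℝ} (ht : t ∈ Set.Icc (0 : ℝ) 1) :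
    damagedDensity (n + 2) lam mu k (strainLine n t) =
      k * mu * t ^ 2 + lam / 2 * (t - 1) ^ 2 + mu := by
  have trace_nonpos : -1 + t ≤ 0 := by linarith [ht.2]
  rw [damagedDensity, strainLine_apply, psiPlusSpec_diagonal, psiMinusSpec_diagonal]
  simp only [Fin.sum_univ_succ, Matrix.cons_val_zero, Matrix.cons_val_succ, Pi.zero_apply,
    zero_pow two_ne_zero, Finset.sum_const_zero, add_zero, max_self, min_self,
    max_eq_right trace_nonpos, min_eq_left trace_nonpos, max_eq_left ht.1, min_eq_right ht.1,
    max_eq_right (neg_one_lt_zero (R := ℝ)).le, min_eq_left (neg_one_lt_zero (R := ℝ)).le]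
  ring

theorem strictConcaveOn_damagedDensity_strainLine (n : ℕ) {lam mu k : ℝ}
    (h : k * mu + lam / 2 < 0) :
    StrictConcaveOn ℝ (Set.Icc 0 1) (damagedDensity (n + 2) lam mu k ∘ strainLine n) := by
  refine (strictConcaveOn_quadratic h (-lam) (lam / 2 + mu) (convex_Icc 0 1)).congr fun t ht => ?_
  rw [Function.comp_apply, damagedDensity_strainLine n lam mu k ht]
  ring

theorem not_convexOn_damagedDensity (n : ℕ) {lam mu k : ℝ} (h : k * mu + lam / 2 < 0) :
    ¬ ConvexOn ℝ {A : Matrix (Fin (n + 2)) (Fin (n + 2)) ℝ | A.IsHermitian}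
        (damagedDensity (n + 2) lam mu k) := by
  intro hconvex
  have convexOn_line : ConvexOn ℝ (Set.Icc 0 1) (damagedDensity (n + 2) lam mu k ∘ strainLine n) :=
    (hconvex.comp_affineMap (strainLine n)).subset
      (fun t _ => by
        rw [Set.mem_preimage, strainLine_apply]
        exact Matrix.isHermitian_diagonal _)
      (convex_Icc 0 1)
  have nontrivial_Icc : (Set.Icc (0 : ℝ) 1).Nontrivial :=
    ⟨0, unitInterval.zero_mem, 1, unitInterval.one_mem, zero_ne_one⟩
  exact not_convexOn_of_strictConcaveOn nontrivial_Icc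
    (strictConcaveOn_damagedDensity_strainLine n h) convexOn_line

end Damaged

theorem stmt_12_general (n : ℕ) {lam mu k : ℝ} (h : k * mu + lam / 2 < 0) :
    ¬ ConvexOn ℝ {A : Matrix (Fin (n + 2)) (Fin (n + 2)) ℝ | A.IsHermitian}
        (fun A => k * psiPlusSpec (n + 2) lam mu A + psiMinusSpec (n + 2) lam mu A) ∧
    ∀ t ∈ Set.Ioo (0 : ℝ) 1,
      k * psiPlusSpec (n + 2) lam mu (Matrix.diagonal (Matrix.vecCons (-1) (Matrix.vecCons t 0)))
          + psiMinusSpec (n + 2) lam mu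
              (Matrix.diagonal (Matrix.vecCons (-1) (Matrix.vecCons t 0)))
        = k * mu * t ^ 2 + lam / 2 * (t - 1) ^ 2 + mu := by
  refine ⟨not_convexOn_damagedDensity n h, fun t ht => ?_⟩
  rw [← strainLine_apply]
  exact damagedDensity_strainLine n lam mu k (Set.Ioo_subset_Icc_self ht)

theorem stmt_12 (mu lam k : ℝ) (hmu : 0 < mu) (hlam : lam < 0)
    (hk0 : 0 < k) (hk : k < -lam / (2 * mu)) :
    ¬ ConvexOn ℝ {A : Matrix (Fin 2) (Fin 2) ℝ | A.IsHermitian}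
        (fun A => k * psiPlusSpec 2 lam mu A + psiMinusSpec 2 lam mu A) ∧
    ∀ t ∈ Set.Ioo (0 : ℝ) 1,
      k * psiPlusSpec 2 lam mu (Matrix.diagonal ![(-1 : ℝ), t])
          + psiMinusSpec 2 lam mu (Matrix.diagonal ![(-1 : ℝ), t])
        = k * mu * t ^ 2 + lam / 2 * (t - 1) ^ 2 + mu := by
  have leadingCoeff_neg : k * mu + lam / 2 < 0 := by linarith [(lt_div_iff₀ (by positivity)).1 hk]
  simpa only [Nat.zero_add, Matrix.zero_empty] using stmt_12_general 0 leadingCoeff_neg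
end
end

section
/- Let b > 0 and define g_d(d) := (exp(bd) − (b(d−1)+1)·exp(b)) / ((b−1)·exp(b) + 1). Then the denominator (b−1)e^b + 1 is strictly positive, g_d(0) = 1, g_d(1) = 0, g_d is differentiable, monotone decreasing on [0,1], maps [0,1] into [0,1], and g_d is strictly convex on [0,1]. -/
noncomputable section

/-- The exponential degradation function of Steinke and Kaliske:
`g_d(d) = (exp(bd) − (b(d−1)+1)e^b) / ((b−1)e^b + 1)`. -/
def gD (b d : ℝ) : ℝ :=
  (Real.exp (b * d) - (b * (d - 1) + 1) * Real.exp b) / ((b - 1) * Real.exp b + 1)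

/-!
Let `f d = exp (b * d)`. The numerator of `g_d` is the gap at `d` between `f` and its tangent line
at `1`, and the denominator is the same gap at `0`. Since `f` is strictly convex, the gap is
strictly convex, vanishes at `1` and is positive elsewhere; having its minimum at `1`, it is
strictly decreasing to the left of `1`.
-/

open Set

section StrictConvexity

variable {𝕜 E F β : Type*}

lemma strictConvexOn_comp_linearMap [Semiring 𝕜] [PartialOrder 𝕜]
    [AddCommMonoid E] [Module 𝕜 E] [AddCommMonoid F] [Module 𝕜 F]
    [AddCommMonoid β] [PartialOrder β] [SMul 𝕜 β] {f : F → β} {s : Set F}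
    (hf : StrictConvexOn 𝕜 s f) (g : E →ₗ[𝕜] F) (hg : Function.Injective g) :
    StrictConvexOn 𝕜 (g ⁻¹' s) (f ∘ g) :=
  ⟨hf.1.linear_preimage g, fun x hx y hy hxy p q hp hq hpq ↦ by
    simpa only [Function.comp_apply, map_add, map_smul] using
      hf.2 hx hy (hg.ne hxy) hp hq hpq⟩

variable [Field 𝕜] [LinearOrder 𝕜] [IsStrictOrderedRing 𝕜]

lemma strictConvexOn_div_const [AddCommMonoid E] [SMul 𝕜 E] {f : E → 𝕜} {s : Set E} {c : 𝕜}
    (hf : StrictConvexOn 𝕜 s f) (hc : 0 < c) : StrictConvexOn 𝕜 s fun x ↦ f x / c :=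
  ⟨hf.1, fun x hx y hy hxy p q hp hq hpq ↦ by
    simpa only [smul_eq_mul, add_div, mul_div_assoc] using
      div_lt_div_of_pos_right (hf.2 hx hy hxy hp hq hpq) hc⟩

lemma strictAntiOn_inter_Iic_of_isMinOn [AddCommMonoid β] [LinearOrder β] [IsOrderedAddMonoid β]
    [Module 𝕜 β] [PosSMulStrictMono 𝕜 β] {f : 𝕜 → β} {s : Set 𝕜} {c : 𝕜}
    (hf : StrictConvexOn 𝕜 s f) (hc : c ∈ s) (hmin : IsMinOn f s c) :
    StrictAntiOn f (s ∩ Iic c) := by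
  rintro x ⟨hx, -⟩ y ⟨-, hyc⟩ hxy
  have hxc : x < c := hxy.trans_le hyc
  have hfc : f c < f x := (hmin hx).lt_of_ne fun h ↦
    hxc.ne (hf.eq_of_isMinOn (fun z hz ↦ h ▸ hmin hz) hmin hx hc)
  obtain rfl | hyc := eq_or_lt_of_le hyc
  · exact hfc
  · have hy : y ∈ openSegment 𝕜 x c := Ioo_subset_openSegment ⟨hxy, hyc⟩
    simpa only [max_eq_left hfc.le] using hf.lt_on_openSegment hx hc hxc.ne hy

end StrictConvexity

/-- The height of the graph of `f` at `x` above its tangent line at `a` (the Bregman divergence of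
`f`). The slope is `deriv f a`, so this is meaningful only where `f` is differentiable at `a`. -/
def tangentGap (f : ℝ → ℝ) (a x : ℝ) : ℝ :=
  f x - (f a + deriv f a * (x - a))

section TangentGap

variable {f : ℝ → ℝ} {s : Set ℝ} {a x : ℝ}

lemma tangentGap_self (f : ℝ → ℝ) (a : ℝ) : tangentGap f a a = 0 := by
  simp [tangentGap]

lemma strictConvexOn_tangentGap (hf : StrictConvexOn ℝ s f) (a : ℝ) :
    StrictConvexOn ℝ s (tangentGap f a) := by
  refine ⟨hf.1, fun x hx y hy hxy p q hp hq hpq ↦ ?_⟩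
  have hlt := hf.2 hx hy hxy hp hq hpq
  obtain rfl : q = 1 - p := by linarith
  simp only [tangentGap, smul_eq_mul] at hlt ⊢
  linarith

lemma tangentGap_pos (hf : StrictConvexOn ℝ s f) (hfa : DifferentiableAt ℝ f a) (ha : a ∈ s)
    (hx : x ∈ s) (hxa : x ≠ a) : 0 < tangentGap f a x := by
  rw [tangentGap, sub_pos]
  obtain hlt | hgt := hxa.lt_or_gt
  · have hslope := hf.slope_lt_deriv hx ha hlt hfa
    rw [slope_def_field, div_lt_iff₀ (sub_pos.2 hlt)] at hslope
    linarith
  · have hslope := hf.deriv_lt_slope ha hx hgt hfa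
    rw [slope_def_field, lt_div_iff₀ (sub_pos.2 hgt)] at hslope
    linarith

lemma isMinOn_tangentGap (hf : StrictConvexOn ℝ s f) (hfa : DifferentiableAt ℝ f a)
    (ha : a ∈ s) : IsMinOn (tangentGap f a) s a := by
  refine isMinOn_iff.2 fun x hx ↦ ?_
  obtain rfl | hxa := eq_or_ne x a
  · rfl
  · exact (tangentGap_self f a).trans_le (tangentGap_pos hf hfa ha hx hxa).le

lemma strictAntiOn_tangentGap (hf : StrictConvexOn ℝ s f) (hfa : DifferentiableAt ℝ f a)
    (ha : a ∈ s) : StrictAntiOn (tangentGap f a) (s ∩ Iic a) :=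
  strictAntiOn_inter_Iic_of_isMinOn (strictConvexOn_tangentGap hf a) ha
    (isMinOn_tangentGap hf hfa ha)

end TangentGap

section ExponentialDegradation

variable {b : ℝ}

lemma strictConvexOn_exp_const_mul (hb : b ≠ 0) :
    StrictConvexOn ℝ univ fun x ↦ Real.exp (b * x) :=
  strictConvexOn_comp_linearMap strictConvexOn_exp (LinearMap.mulLeft ℝ b)
    (mul_right_injective₀ hb)

lemma tangentGap_exp_const_mul_one (b d : ℝ) :
    tangentGap (fun x ↦ Real.exp (b * x)) 1 d =
      Real.exp (b * d) - (b * (d - 1) + 1) * Real.exp b := by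
  have hderiv : HasDerivAt (fun x ↦ Real.exp (b * x)) (Real.exp (b * 1) * b) 1 :=
    (hasDerivAt_const_mul b).exp
  rw [tangentGap, hderiv.deriv, mul_one]
  ring

lemma tangentGap_exp_const_mul_one_zero (b : ℝ) :
    tangentGap (fun x ↦ Real.exp (b * x)) 1 0 = (b - 1) * Real.exp b + 1 := by
  rw [tangentGap_exp_const_mul_one, mul_zero, Real.exp_zero]
  ring

lemma gD_eq_tangentGap_div (b : ℝ) :
    gD b = fun d ↦ tangentGap (fun x ↦ Real.exp (b * x)) 1 d /
      tangentGap (fun x ↦ Real.exp (b * x)) 1 0 := by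
  funext d
  rw [gD, tangentGap_exp_const_mul_one, tangentGap_exp_const_mul_one_zero]

lemma tangentGap_exp_const_mul_one_zero_pos (hb : b ≠ 0) :
    0 < tangentGap (fun x ↦ Real.exp (b * x)) 1 0 :=
  tangentGap_pos (strictConvexOn_exp_const_mul hb) (by fun_prop) (mem_univ 1) (mem_univ 0)
    zero_ne_one

lemma gD_zero (hb : b ≠ 0) : gD b 0 = 1 := by
  rw [gD_eq_tangentGap_div]
  exact div_self (tangentGap_exp_const_mul_one_zero_pos hb).ne'

lemma gD_one (b : ℝ) : gD b 1 = 0 := by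
  simp only [gD_eq_tangentGap_div, tangentGap_self, zero_div]

lemma differentiable_gD (b : ℝ) : Differentiable ℝ (gD b) := by
  unfold gD
  fun_prop

lemma strictAntiOn_gD (hb : b ≠ 0) : StrictAntiOn (gD b) (Iic 1) := by
  have hgap : StrictAntiOn (tangentGap (fun x ↦ Real.exp (b * x)) 1) (Iic 1) := by
    simpa only [univ_inter] using
      strictAntiOn_tangentGap (strictConvexOn_exp_const_mul hb) (by fun_prop) (mem_univ 1)
  rw [gD_eq_tangentGap_div]
  exact fun x hx y hy hxy ↦
    div_lt_div_of_pos_right (hgap hx hy hxy) (tangentGap_exp_const_mul_one_zero_pos hb)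

lemma strictConvexOn_gD (hb : b ≠ 0) : StrictConvexOn ℝ univ (gD b) := by
  rw [gD_eq_tangentGap_div]
  exact strictConvexOn_div_const
    (strictConvexOn_tangentGap (strictConvexOn_exp_const_mul hb) 1)
    (tangentGap_exp_const_mul_one_zero_pos hb)

lemma mapsTo_gD_Icc (hb : b ≠ 0) : MapsTo (gD b) (Icc 0 1) (Icc 0 1) := by
  have hanti : AntitoneOn (gD b) (Icc 0 1) :=
    (strictAntiOn_gD hb).antitoneOn.mono Icc_subset_Iic_self
  simpa only [gD_zero hb, gD_one] using hanti.mapsTo_Icc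

end ExponentialDegradation

theorem stmt_16_general (b : ℝ) (hb : b ≠ 0) :
    0 < (b - 1) * Real.exp b + 1 ∧
    gD b 0 = 1 ∧ gD b 1 = 0 ∧
    Differentiable ℝ (gD b) ∧
    StrictAntiOn (gD b) (Iic 1) ∧
    MapsTo (gD b) (Icc 0 1) (Icc 0 1) ∧
    StrictConvexOn ℝ univ (gD b) :=
  ⟨tangentGap_exp_const_mul_one_zero b ▸ tangentGap_exp_const_mul_one_zero_pos hb,
    gD_zero hb, gD_one b, differentiable_gD b, strictAntiOn_gD hb, mapsTo_gD_Icc hb,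
    strictConvexOn_gD hb⟩

theorem stmt_16 (b : ℝ) (hb : 0 < b) :
    0 < (b - 1) * Real.exp b + 1 ∧
    gD b 0 = 1 ∧ gD b 1 = 0 ∧
    Differentiable ℝ (gD b) ∧
    AntitoneOn (gD b) (Set.Icc 0 1) ∧
    Set.MapsTo (gD b) (Set.Icc 0 1) (Set.Icc 0 1) ∧
    StrictConvexOn ℝ (Set.Icc 0 1) (gD b) := by
  obtain ⟨hD, h0, h1, hdiff, hanti, hmaps, hconv⟩ := stmt_16_general b hb.ne'
  exact ⟨hD, h0, h1, hdiff, hanti.antitoneOn.mono Icc_subset_Iic_self, hmaps,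
    hconv.subset (subset_univ _) (convex_Icc 0 1)⟩
end
end

section
/- Let E be a finite-dimensional real normed vector space, J : E → ℝ ∪ {∞} with domain dom J := {x : J(x) < ∞}, and assume: J is proper (dom J ≠ ∅), lower semicontinuous, coercive (all sublevel sets {x : J(x) ≤ c} are bounded), and continuous on dom J. Let V₁, …, V_n be linear subspaces of E such that for every V ∈ dom J and every i, the function J has a unique global minimizer on the affine subspace V + Vᵢ. Let M₁, …, M_n : E → E be maps with Mᵢ(dom J) ⊆ dom J and Mᵢ(V) − V ∈ Vᵢ for all V ∈ dom J, satisfying: (monotonicity) J(Mᵢ(V)) ≤ J(V) for all V ∈ dom J; (continuity) J ∘ Mᵢ is continuous on dom J; (stability) J(Mᵢ(V)) < J(V) whenever J(V) is not minimal on V + Vᵢ. Let (U^ν)_{ν≥0} be a sequence with U⁰ ∈ dom J such that for each ν, setting U^{ν+1/2} := (M_n ∘ ⋯ ∘ M₁)(U^ν), the next iterate U^{ν+1} ∈ E satisfies J(U^{ν+1}) ≤ J(U^{ν+1/2}). Then every accumulation point U of the sequence (U^ν) is stationary in the sense that J(U) ≤ J(U + V) for all V ∈ Vᵢ and all i. 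-/
noncomputable section

/-!
The energy decreases along the iteration, so at an accumulation point `x` it satisfies
`J x ≤ J (U ν)` for all `ν`. Along a filter on which `U` converges to `x`, the energies of all
intermediate iterates of the smoother are therefore squeezed between `J x` and `J (U ν) → J x`.
By continuity of `J ∘ M₁` this gives `J (M₁ x) = J x`, and stability makes `x` a minimizer in the
first direction. Every cluster point of `M₁ (U ν)` has energy `J x` and lies in the same search set,
so by uniqueness it is `x`. Compactness then yields `M₁ (U ν) → x`, and the argument repeats with
`M₂`.
-/

section LocalCorrection

open Filter Set Topology

variable {E α : Type*}

theorem apply_foldl_le {ι : Type*} [Preorder α] {J : E → α} {c : α} {M : ι → E → E}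
    (hM : ∀ i y, J y ≤ c → J (M i y) ≤ J y) (l : List ι) {x : E} (hx : J x ≤ c) :
    J (l.foldl (fun y i ↦ M i y) x) ≤ J x :=
  List.foldlRecOn l (fun y i ↦ M i y) (motive := fun y ↦ J y ≤ J x) le_rfl
    fun y hy i _ ↦ (hM i y (hy.trans hx)).trans hy

variable [TopologicalSpace E] [TopologicalSpace α] [LinearOrder α]

theorem tendsto_of_unique_isMinOn [T2Space α] {β : Type*} {F : Filter β} {J : E → α} {S : Set E}
    {A : E → Set E} {v w : β → E} {x : E} (hS : IsCompact S) (hJ : ContinuousOn J S)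
    (hA : IsClosed {p : E × E | p.2 ∈ A p.1}) (hself : x ∈ A x)
    (hunique : {y ∈ A x | IsMinOn J (A x) y}.Subsingleton) (hmin : IsMinOn J (A x) x)
    (hvS : ∀ᶠ b in F, v b ∈ S) (hvA : ∀ᶠ b in F, v b ∈ A (w b))
    (hw : Tendsto w F (𝓝 x)) (hJv : Tendsto (fun b ↦ J (v b)) F (𝓝 (J x))) :
    Tendsto v F (𝓝 x) := by
  refine hS.tendsto_nhds_of_unique_mapClusterPt hvS fun y hyS hy ↦ ?_
  obtain ⟨G, hGF, hGy⟩ := mapClusterPt_iff_ultrafilter.1 hy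
  have hJy : J y = J x := tendsto_nhds_unique
    ((hJ y hyS).tendsto.comp (tendsto_nhdsWithin_iff.2 ⟨hGy, hGF hvS⟩)) (hJv.mono_left hGF)
  have hyA : y ∈ A x :=
    hA.mem_of_tendsto ((hw.mono_left hGF).prodMk_nhds hGy) (hGF hvA)
  exact hunique ⟨hyA, fun z hz ↦ hJy.le.trans (hmin hz)⟩ ⟨hself, hmin⟩

/-- `T` is an inexact local correction operator on `S` for minimizing the energy `J`, where `A x`
is the set of candidates reachable from `x`. In the subspace correction setting `A x` is the affine
subspace `x + V`, encoded as `{z | z - x ∈ V}`. -/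
structure IsLocalCorrection (J : E → α) (S : Set E) (A : E → Set E) (T : E → E) : Prop where
  mem : ∀ x ∈ S, T x ∈ A x
  le : ∀ x ∈ S, J (T x) ≤ J x
  continuousOn : ContinuousOn (J ∘ T) S
  lt_of_not_isMinOn : ∀ x ∈ S, ¬ IsMinOn J (A x) x → J (T x) < J x

namespace IsLocalCorrection

variable {J : E → α} {S S' : Set E} {A : E → Set E} {T : E → E}

theorem mono (hT : IsLocalCorrection J S A T) (hS : S' ⊆ S) : IsLocalCorrection J S' A T where
  mem x hx := hT.mem x (hS hx)
  le x hx := hT.le x (hS hx)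
  continuousOn := hT.continuousOn.mono hS
  lt_of_not_isMinOn x hx := hT.lt_of_not_isMinOn x (hS hx)

theorem isMinOn_of_tendsto [T2Space α] {β : Type*} {F : Filter β} [F.NeBot] {w : β → E} {x : E}
    (hT : IsLocalCorrection J S A T) (hx : x ∈ S) (hwS : ∀ᶠ b in F, w b ∈ S)
    (hw : Tendsto w F (𝓝 x)) (hJTw : Tendsto (fun b ↦ J (T (w b))) F (𝓝 (J x))) :
    IsMinOn J (A x) x := by
  have hJT : Tendsto (fun b ↦ J (T (w b))) F (𝓝 (J (T x))) :=
    (hT.continuousOn x hx).tendsto.comp (tendsto_nhdsWithin_iff.2 ⟨hw, hwS⟩)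
  by_contra hmin
  exact (hT.lt_of_not_isMinOn x hx hmin).ne (tendsto_nhds_unique hJT hJTw)

end IsLocalCorrection

variable {ι : Type*} {J : E → α} {c : α} {A : ι → E → Set E} {M : ι → E → E}

theorem isMinOn_of_le_foldl [OrderTopology α] {β : Type*} {F : Filter β} [F.NeBot] {x : E}
    (hcompact : IsCompact {y | J y ≤ c}) (hJ : ContinuousOn J {y | J y ≤ c})
    (hA : ∀ i, IsClosed {p : E × E | p.2 ∈ A i p.1}) (hself : ∀ i, x ∈ A i x)
    (hunique : ∀ i, {y ∈ A i x | IsMinOn J (A i x) y}.Subsingleton)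
    (hM : ∀ i, IsLocalCorrection J {y | J y ≤ c} (A i) (M i)) (hx : J x ≤ c)
    (l : List ι) {w : β → E} (hwc : ∀ b, J (w b) ≤ c) (hw : Tendsto w F (𝓝 x))
    (hle : ∀ b, J x ≤ J (l.foldl (fun y i ↦ M i y) (w b))) : ∀ i ∈ l, IsMinOn J (A i x) x := by
  induction l generalizing w with
  | nil => exact List.forall_mem_nil _
  | cons i l ih =>
    have hMwc (b : β) : J (M i (w b)) ≤ c := ((hM i).le _ (hwc b)).trans (hwc b)
    have hJw : Tendsto (fun b ↦ J (w b)) F (𝓝 (J x)) :=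
      (hJ x hx).tendsto.comp (tendsto_nhdsWithin_iff.2 ⟨hw, .of_forall hwc⟩)
    have hJMw : Tendsto (fun b ↦ J (M i (w b))) F (𝓝 (J x)) :=
      tendsto_of_tendsto_of_tendsto_of_le_of_le tendsto_const_nhds hJw
        (fun b ↦ (hle b).trans (apply_foldl_le (fun i ↦ (hM i).le) l (hMwc b)))
        fun b ↦ (hM i).le _ (hwc b)
    have hmin : IsMinOn J (A i x) x := (hM i).isMinOn_of_tendsto hx (.of_forall hwc) hw hJMw
    have hMw : Tendsto (fun b ↦ M i (w b)) F (𝓝 x) :=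
      tendsto_of_unique_isMinOn hcompact hJ (hA i) (hself i) (hunique i) hmin
        (.of_forall hMwc) (.of_forall fun b ↦ (hM i).mem _ (hwc b)) hw hJMw
    exact List.forall_mem_cons.2 ⟨hmin, ih hMwc hMw hle⟩

theorem stmt_18_general [T2Space E] [OrderTopology α] {l : List ι} {U : ℕ → E} {x : E}
    (hcompact : IsCompact {y | J y ≤ c}) (hJ : ContinuousOn J {y | J y ≤ c})
    (hA : ∀ i, IsClosed {p : E × E | p.2 ∈ A i p.1}) (hself : ∀ i y, J y ≤ c → y ∈ A i y)
    (hunique : ∀ i y, J y ≤ c → {z ∈ A i y | IsMinOn J (A i y) z}.Subsingleton)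
    (hM : ∀ i, IsLocalCorrection J {y | J y ≤ c} (A i) (M i)) (hU0 : J (U 0) ≤ c)
    (hstep : ∀ ν, J (U (ν + 1)) ≤ J (l.foldl (fun y i ↦ M i y) (U ν)))
    (hacc : MapClusterPt x atTop U) : ∀ i ∈ l, IsMinOn J (A i x) x := by
  have hUc (ν : ℕ) : J (U ν) ≤ c := by
    induction ν with
    | zero => exact hU0
    | succ ν ih => exact (hstep ν).trans ((apply_foldl_le (fun i ↦ (hM i).le) l ih).trans ih)
  have hanti : Antitone fun ν ↦ J (U ν) := antitone_nat_of_succ_le fun ν ↦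
    (hstep ν).trans (apply_foldl_le (fun i ↦ (hM i).le) l (hUc ν))
  obtain ⟨F, hF, hUx⟩ := mapClusterPt_iff_ultrafilter.1 hacc
  have hx : J x ≤ c := hcompact.isClosed.mem_of_tendsto hUx (.of_forall hUc)
  have hJU : Tendsto (fun ν ↦ J (U ν)) F (𝓝 (J x)) :=
    (hJ x hx).tendsto.comp (tendsto_nhdsWithin_iff.2 ⟨hUx, .of_forall hUc⟩)
  have hle (ν : ℕ) : J x ≤ J (U ν) :=
    le_of_tendsto hJU (hF ((eventually_ge_atTop ν).mono fun _ h ↦ hanti h))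
  exact isMinOn_of_le_foldl hcompact hJ hA (hself · x hx) (hunique · x hx) hM hx l hUc hUx
    fun ν ↦ (hle (ν + 1)).trans (hstep ν)

end LocalCorrection

theorem stmt_18 {E : Type*} [NormedAddCommGroup E] [NormedSpace ℝ E]
    [FiniteDimensional ℝ E]
    -- J : E → ℝ ∪ {∞}, encoded as an `EReal`-valued function never taking the value −∞
    (J : E → EReal) (hbot : ∀ x, J x ≠ ⊥)
    (D : Set E) (hD : D = {x | J x < ⊤})
    -- J is proper
    (hproper : D.Nonempty)
    -- J is lower semicontinuous
    (hlsc : LowerSemicontinuous J)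
    -- J is coercive: all sublevel sets are bounded
    (hcoercive : ∀ c : ℝ, Bornology.IsBounded {x | J x ≤ (c : EReal)})
    -- J is continuous on its domain
    (hcont : ContinuousOn J D)
    -- the subspaces V₁, …, V_n
    (n : ℕ) (V : Fin n → Submodule ℝ E)
    -- J has a unique global minimizer on each affine subspace V + Vᵢ, V ∈ dom J
    (hunique : ∀ x ∈ D, ∀ i : Fin n,
      ∃! y : E, y - x ∈ V i ∧ ∀ z : E, z - x ∈ V i → J y ≤ J z)
    -- the local correction operators M₁, …, M_n
    (M : Fin n → E → E)
    (hmaps : ∀ i : Fin n, ∀ x ∈ D, M i x ∈ D)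
    (hVmem : ∀ i : Fin n, ∀ x ∈ D, M i x - x ∈ V i)
    -- monotonicity
    (hmono : ∀ i : Fin n, ∀ x ∈ D, J (M i x) ≤ J x)
    -- continuity of J ∘ Mᵢ
    (hMcont : ∀ i : Fin n, ContinuousOn (fun x => J (M i x)) D)
    -- stability
    (hstable : ∀ i : Fin n, ∀ x ∈ D,
      (∃ z : E, z - x ∈ V i ∧ J z < J x) → J (M i x) < J x)
    -- the iterates: U^{ν+1/2} = (M_n ∘ ⋯ ∘ M₁)(U^ν) and J(U^{ν+1}) ≤ J(U^{ν+1/2})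
    (U : ℕ → E) (hU0 : U 0 ∈ D)
    (hstep : ∀ ν : ℕ, J (U (ν + 1)) ≤ J (Fin.foldl n (fun y i => M i y) (U ν)))
    -- an accumulation point of the sequence
    (Ustar : E) (hacc : MapClusterPt Ustar Filter.atTop U) :
    ∀ i : Fin n, ∀ v ∈ V i, J Ustar ≤ J (Ustar + v) := by
  set c : ℝ := (J (U 0)).toReal
  have hcD : {y | J y ≤ c} ⊆ D := fun y hy ↦ hD ▸ lt_of_le_of_lt hy (EReal.coe_lt_top c)
  have hU0c : J (U 0) ≤ c := EReal.le_coe_toReal (hD ▸ hU0 : U 0 ∈ {x | J x < ⊤}).ne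
  have : ProperSpace E := FiniteDimensional.proper ℝ E
  have hcompact : IsCompact {y | J y ≤ c} :=
    Metric.isCompact_of_isClosed_isBounded (hlsc.isClosed_preimage c) (hcoercive c)
  have hclosed (i : Fin n) : IsClosed {p : E × E | p.2 - p.1 ∈ V i} :=
    (V i).closed_of_finiteDimensional.preimage (continuous_snd.sub continuous_fst)
  have hM (i : Fin n) : IsLocalCorrection J D (fun x ↦ {z | z - x ∈ V i}) (M i) :=
    ⟨hVmem i, hmono i, hMcont i, fun x hx hmin ↦ hstable i x hx <| by
      simpa only [isMinOn_iff, Set.mem_ofPred_eq, not_forall, not_le, exists_prop] using hmin⟩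
  have hmin : ∀ i ∈ List.finRange n, IsMinOn J {z | z - Ustar ∈ V i} Ustar :=
    stmt_18_general hcompact (hcont.mono hcD) hclosed
      (fun i y _ ↦ show y - y ∈ V i by simp)
      (fun i y hy _ hz _ hz' ↦ (hunique y (hcD hy) i).unique hz hz')
      (fun i ↦ (hM i).mono hcD) hU0c
      (by simpa only [Fin.foldl_eq_foldl_finRange] using hstep) hacc
  exact fun i v hv ↦ hmin i (List.mem_finRange i) (show Ustar + v - Ustar ∈ V i by simpa)
end
end
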